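/- If F₁ and F₂ are two maximal hke collections with α(F₁) = α(F₂), then F₁ and F₂ are isomorphic: there is a bijection g : ⋃F₁ → ⋃F₂ such that g[S] ∈ F₂ for every S ∈ F₁ and g⁻¹[S] ∈ F₁ for every S ∈ F₂. -/

import Mathlib

open Finset

/-- The union of a finite collection of finite sets. -/
def famUnion (Γ : Finset (Finset ℕ)) : Finset ℕ := Γ.sup id

/-- The intersection of a finite collection of finite sets
(equal to the usual intersection when the collection is nonempty). -/
def famInter (Γ : Finset (Finset ℕ)) : Finset ℕ :=
  (Γ.sup id).filter (fun x => ∀ A ∈ Γ, x ∈ A)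

/-- `F` is a hereditary König–Egerváry (hke) collection with `α(F) = α`:
`α` is a positive integer and `|⋃Γ| + |⋂Γ| = 2α` for every nonempty subcollection `Γ` of `F`. -/
def IsHKE (F : Finset (Finset ℕ)) (α : ℕ) : Prop :=
  0 < α ∧ ∀ Γ ⊆ F, Γ.Nonempty → (famUnion Γ).card + (famInter Γ).card = 2 * α

/-- `F` is a maximal hke collection: it is an hke collection and no collection
properly containing it is an hke collection. -/
def IsMaxHKE (F : Finset (Finset ℕ)) : Prop :=
  (∃ α, IsHKE F α) ∧ ∀ F' : Finset (Finset ℕ), F ⊂ F' → ¬ ∃ β, IsHKE F' β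

/-- Two collections are isomorphic: there is a bijection `g : ⋃F₁ → ⋃F₂` such that
`g[S] ∈ F₂` for every `S ∈ F₁` and `g⁻¹[S] ∈ F₁` for every `S ∈ F₂`. -/
def CollIso (F₁ F₂ : Finset (Finset ℕ)) : Prop :=
  ∃ g : ℕ → ℕ, Set.BijOn g ↑(famUnion F₁) ↑(famUnion F₂) ∧
    (∀ S ∈ F₁, S.image g ∈ F₂) ∧
    (∀ S ∈ F₂, (famUnion F₁).filter (fun x => g x ∈ S) ∈ F₁)

def trv {α : ℕ} (φ : Fin α × Bool → ℕ) (c : Fin α → Bool) : Finset ℕ :=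
  Finset.univ.image (fun i => φ (i, c i))

def trvFam {α : ℕ} (φ : Fin α × Bool → ℕ) : Finset (Finset ℕ) :=
  Finset.univ.image (trv φ)

lemma mem_famUnion (Γ : Finset (Finset ℕ)) (x : ℕ) : x ∈ famUnion Γ ↔ ∃ A ∈ Γ, x ∈ A := by
  simp [famUnion, Finset.mem_sup]

lemma mem_famInter (Γ : Finset (Finset ℕ)) (h : Γ.Nonempty) (x : ℕ) :
    x ∈ famInter Γ ↔ ∀ A ∈ Γ, x ∈ A := by
  have := mem_famUnion Γ x
  unfold famUnion at this
  unfold famInter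
  rw [Finset.mem_filter, this]
  obtain ⟨A, hA⟩ := h
  exact ⟨fun h => h.2, fun h => ⟨⟨A, hA, h A hA⟩, h⟩⟩

lemma mem_trv {α : ℕ} (φ : Fin α × Bool → ℕ) (hφ : Function.Injective φ) (c : Fin α → Bool)
    (p : Fin α × Bool) : φ p ∈ trv φ c ↔ c p.1 = p.2 := by
  obtain ⟨i, b⟩ := p
  simp only [trv, Finset.mem_image, Finset.mem_univ, true_and]
  constructor
  · rintro ⟨j, hj⟩
    have := hφ hj
    simp only [Prod.mk.injEq] at this
    obtain ⟨rfl, h⟩ := this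
    exact h
  · intro h
    exact ⟨i, by rw [show c i = b from h]⟩

lemma mem_trv_range {α : ℕ} (φ : Fin α × Bool → ℕ) (c : Fin α → Bool)
    (x : ℕ) (hx : x ∈ trv φ c) : ∃ p, φ p = x := by
  simp only [trv, Finset.mem_image, Finset.mem_univ, true_and] at hx
  obtain ⟨j, hj⟩ := hx
  exact ⟨_, hj⟩

lemma trvFam_hke {α : ℕ} (hα : 0 < α) (φ : Fin α × Bool → ℕ) (hφ : Function.Injective φ) :
    IsHKE (trvFam φ) α := by
  classical
  refine ⟨hα, fun Γ hΓ hne => ?_⟩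
  have hsub : ∀ A ∈ Γ, ∃ c, trv φ c = A := by
    intro A hA
    have := hΓ hA
    simpa [trvFam] using this
  have hflip : ∀ A ∈ Γ, ∀ p : Fin α × Bool, φ (p.1, !p.2) ∈ A ↔ ¬ φ p ∈ A := by
    intro A hA p
    obtain ⟨c, rfl⟩ := hsub A hA
    rw [mem_trv φ hφ, mem_trv φ hφ]
    cases c p.1 <;> cases p.2 <;> simp
  have hU : famUnion Γ = (Finset.univ.filter (fun p => ∃ A ∈ Γ, φ p ∈ A)).image φ := by
    ext x
    rw [mem_famUnion]
    simp only [Finset.mem_image, Finset.mem_filter, Finset.mem_univ, true_and]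
    constructor
    · rintro ⟨A, hA, hx⟩
      obtain ⟨c, rfl⟩ := hsub A hA
      obtain ⟨p, rfl⟩ := mem_trv_range φ c x hx
      exact ⟨p, ⟨_, hA, hx⟩, rfl⟩
    · rintro ⟨p, h, rfl⟩
      exact h
  have hI : famInter Γ = (Finset.univ.filter (fun p => ∀ A ∈ Γ, φ p ∈ A)).image φ := by
    ext x
    rw [mem_famInter Γ hne]
    simp only [Finset.mem_image, Finset.mem_filter, Finset.mem_univ, true_and]
    constructor
    · intro h
      obtain ⟨A, hA⟩ := hne
      obtain ⟨c, rfl⟩ := hsub A hA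
      obtain ⟨p, rfl⟩ := mem_trv_range φ c x (h _ hA)
      exact ⟨p, h, rfl⟩
    · rintro ⟨p, h, rfl⟩
      exact h
  rw [hU, hI, Finset.card_image_of_injective _ hφ, Finset.card_image_of_injective _ hφ]
  have h1 : (Finset.univ.filter (fun p => ∃ A ∈ Γ, φ p ∈ A)).card
      = (Finset.univ.filter (fun p => ¬ ∀ A ∈ Γ, φ p ∈ A)).card := by
    refine Finset.card_bij' (fun p _ => (p.1, !p.2)) (fun p _ => (p.1, !p.2)) ?_ ?_ ?_ ?_
    · intro p hp
      simp only [Finset.mem_filter, Finset.mem_univ, true_and] at hp ⊢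
      obtain ⟨A, hA, h⟩ := hp
      intro h'
      exact (hflip A hA p).1 (h' A hA) h
    · intro p hp
      simp only [Finset.mem_filter, Finset.mem_univ, true_and] at hp ⊢
      push Not at hp
      obtain ⟨A, hA, h⟩ := hp
      exact ⟨A, hA, (hflip A hA p).2 h⟩
    · intro p _; simp
    · intro p _; simp
  rw [h1, add_comm, Finset.card_filter_add_card_filter_not]
  simp [mul_comm]

lemma exists_equiv_fib {X Y Z : Type} [Fintype X] [Fintype Y] [DecidableEq Z]
    (f : X → Z) (g : Y → Z)
    (h : ∀ z, Fintype.card {x // f x = z} = Fintype.card {y // g y = z}) :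
    ∃ e : X ≃ Y, ∀ x, g (e x) = f x := by
  have e' : ∀ z, {x // f x = z} ≃ {y // g y = z} := fun z => Fintype.equivOfCardEq (h z)
  refine ⟨(Equiv.sigmaFiberEquiv f).symm.trans
    ((Equiv.sigmaCongrRight e').trans (Equiv.sigmaFiberEquiv g)), fun x => ?_⟩
  exact (e' (f x) ⟨x, rfl⟩).2

def cnt (U : Finset ℕ) (P Q : Finset (Finset ℕ)) : ℕ :=
  (U.filter (fun x => (∀ A ∈ P, x ∈ A) ∧ ∀ A ∈ Q, x ∉ A)).card

lemma cnt_insert_left (U : Finset ℕ) (P Q : Finset (Finset ℕ)) (B : Finset ℕ) :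
    cnt U (insert B P) Q + cnt U P (insert B Q) = cnt U P Q := by
  unfold cnt
  rw [← Finset.card_filter_add_card_filter_not
    (s := U.filter (fun x => (∀ A ∈ P, x ∈ A) ∧ ∀ A ∈ Q, x ∉ A)) (fun x => x ∈ B),
    Finset.filter_filter, Finset.filter_filter]
  congr 2
  · ext x; simp only [Finset.mem_filter, Finset.forall_mem_insert]; tauto
  · ext x; simp only [Finset.mem_filter, Finset.forall_mem_insert]; tauto

lemma cnt_symm (F : Finset (Finset ℕ)) (α : ℕ) (h : IsHKE F α) (U : Finset ℕ)
    (hU : famUnion F ⊆ U) (hc : U.card = 2 * α) (Q : Finset (Finset ℕ)) :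
    Q ⊆ F → ∀ P ⊆ F, cnt U P Q = cnt U Q P := by
  induction Q using Finset.induction_on with
  | empty =>
    intro _ P hP
    rcases P.eq_empty_or_nonempty with rfl | hne
    · rfl
    have h0 := h.2 P hP hne
    have hPU : famUnion P ⊆ U := by
      intro x hx
      apply hU
      rw [mem_famUnion] at hx ⊢
      obtain ⟨A, hA, hx⟩ := hx
      exact ⟨A, hP hA, hx⟩
    have e1 : cnt U P ∅ = (famInter P).card := by
      unfold cnt
      congr 1
      ext x
      rw [mem_famInter P hne]
      simp only [Finset.mem_filter, Finset.notMem_empty, false_imp_iff, implies_true, and_true]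
      refine ⟨fun h => h.2, fun h => ⟨hPU ?_, h⟩⟩
      obtain ⟨A, hA⟩ := hne
      exact (mem_famUnion P x).2 ⟨A, hA, h A hA⟩
    have e2 : cnt U ∅ P = (U \ famUnion P).card := by
      unfold cnt
      congr 1
      ext x
      rw [Finset.mem_sdiff, mem_famUnion]
      simp
    rw [e1, e2, Finset.card_sdiff_of_subset hPU]
    omega
  | insert B Q _ ih =>
    intro hQ P hP
    have hB : B ∈ F := hQ (Finset.mem_insert_self _ _)
    have hQ' : Q ⊆ F := (Finset.subset_insert _ _).trans hQ
    have a1 := cnt_insert_left U P Q B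
    have a2 := cnt_insert_left U Q P B
    have a3 := ih hQ' P hP
    have a4 := ih hQ' (insert B P) (Finset.insert_subset hB hP)
    omega

lemma max_nonempty (F : Finset (Finset ℕ)) (h : IsMaxHKE F) : F.Nonempty := by
  by_contra hne
  rw [Finset.not_nonempty_iff_eq_empty] at hne
  subst hne
  refine h.2 {{0}} (by simp [Finset.ssubset_iff_subset_ne, eq_comm]) ⟨1, one_pos, fun Γ hΓ hne => ?_⟩
  obtain rfl := (Finset.Nonempty.subset_singleton_iff hne).1 hΓ
  decide

lemma max_struct (F : Finset (Finset ℕ)) (α : ℕ) (hm : IsMaxHKE F) (h : IsHKE F α) :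
    ∃ φ : Fin α × Bool → ℕ, Function.Injective φ ∧ F = trvFam φ := by
  classical
  obtain ⟨A₀, hA₀⟩ := max_nonempty F hm
  have hcard : ∀ Γ ⊆ F, Γ.Nonempty → (famUnion Γ).card + (famInter Γ).card = 2 * α := h.2
  obtain ⟨U, hU, hUc⟩ := Infinite.exists_superset_card_eq (famUnion F) (2 * α)
    (by have := hcard F subset_rfl ⟨A₀, hA₀⟩; omega)
  have hFU : ∀ A ∈ F, A ⊆ U := fun A hA x hx => hU ((mem_famUnion F x).2 ⟨A, hA, hx⟩)
  have hAc : A₀.card = α := by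
    have h1 := hcard {A₀} (by simpa using hA₀) (by simp)
    have h2 : famUnion {A₀} = A₀ := by ext x; simp [mem_famUnion]
    have h3 : famInter {A₀} = A₀ := by ext x; simp [mem_famInter]
    rw [h2, h3] at h1
    omega
  obtain ⟨e, he⟩ := exists_equiv_fib (X := A₀) (Y := (U \ A₀ : Finset ℕ))
    (fun x => F.filter (fun A => x.1 ∈ A)) (fun y => F.filter (fun A => y.1 ∉ A)) (by
      intro z
      by_cases hz : z ⊆ F ∧ A₀ ∈ z
      · obtain ⟨hzF, hz⟩ := hz
        have key := cnt_symm F α h U hU hUc (F \ z) Finset.sdiff_subset z hzF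
        have k1 : Fintype.card {x : A₀ // F.filter (fun A => x.1 ∈ A) = z} = cnt U z (F \ z) := by
          unfold cnt
          rw [Fintype.card_subtype]
          refine Finset.card_bij (fun x _ => x.1) ?_ ?_ ?_
          · rintro ⟨x, hx⟩ h
            simp only [Finset.mem_filter, Finset.mem_univ, true_and] at h ⊢
            subst h
            refine ⟨hFU _ hA₀ hx, ?_, ?_⟩
            · intro A hA; exact (Finset.mem_filter.1 hA).2
            · intro A hA hxA
              simp at hA
              exact hA.2 hA.1 hxA
          · intro a _ b _ hab; exact Subtype.ext hab
          · intro x hx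
            simp only [Finset.mem_filter, Finset.mem_sdiff] at hx
            refine ⟨⟨x, hx.2.1 _ hz⟩, ?_, rfl⟩
            simp only [Finset.mem_filter, Finset.mem_univ, true_and]
            ext A
            simp only [Finset.mem_filter]
            constructor
            · rintro ⟨h1, h2⟩
              by_contra h3
              exact hx.2.2 A ⟨h1, h3⟩ h2
            · intro h1; exact ⟨hzF h1, hx.2.1 A h1⟩
        have k2 : Fintype.card {y : (U \ A₀ : Finset ℕ) // F.filter (fun A => y.1 ∉ A) = z}
            = cnt U (F \ z) z := by
          unfold cnt
          rw [Fintype.card_subtype]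
          refine Finset.card_bij (fun x _ => x.1) ?_ ?_ ?_
          · rintro ⟨x, hx⟩ h
            simp only [Finset.mem_filter, Finset.mem_univ, true_and] at h ⊢
            subst h
            refine ⟨(Finset.mem_sdiff.1 hx).1, ?_, ?_⟩
            · intro A hA
              simp at hA
              exact hA.2 hA.1
            · intro A hA; exact (Finset.mem_filter.1 hA).2
          · intro a _ b _ hab; exact Subtype.ext hab
          · intro x hx
            simp only [Finset.mem_filter, Finset.mem_sdiff] at hx
            refine ⟨⟨x, Finset.mem_sdiff.2 ⟨hx.1, hx.2.2 _ hz⟩⟩, ?_, rfl⟩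
            simp only [Finset.mem_filter, Finset.mem_univ, true_and]
            ext A
            simp only [Finset.mem_filter]
            constructor
            · rintro ⟨h1, h2⟩
              by_contra h3
              exact h2 (hx.2.1 A ⟨h1, h3⟩)
            · intro h1; exact ⟨hzF h1, hx.2.2 A h1⟩
        rw [k1, k2, key]
      · have i1 : IsEmpty {x : A₀ // F.filter (fun A => x.1 ∈ A) = z} := by
          refine ⟨?_⟩
          rintro ⟨⟨x, hx⟩, rfl⟩
          exact hz ⟨Finset.filter_subset _ _, Finset.mem_filter.2 ⟨hA₀, hx⟩⟩
        have i2 : IsEmpty {y : (U \ A₀ : Finset ℕ) // F.filter (fun A => y.1 ∉ A) = z} := by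
          refine ⟨?_⟩
          rintro ⟨⟨x, hx⟩, rfl⟩
          exact hz ⟨Finset.filter_subset _ _, Finset.mem_filter.2 ⟨hA₀, (Finset.mem_sdiff.1 hx).2⟩⟩
        rw [Fintype.card_eq_zero, Fintype.card_eq_zero])
  have hcompl : ∀ A ∈ F, ∀ x : A₀, (e x).1 ∉ A ↔ x.1 ∈ A := by
    intro A hA x
    have := Finset.ext_iff.1 (he x) A
    simpa [hA] using this
  let ι : Fin α ≃ A₀ := (Finset.equivFinOfCardEq hAc).symm
  let φ : Fin α × Bool → ℕ := fun p => if p.2 then (ι p.1).1 else (e (ι p.1)).1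
  have hin : ∀ x : A₀, (e x).1 ∉ A₀ := fun x => (Finset.mem_sdiff.1 (e x).2).2
  have hφ : Function.Injective φ := by
    rintro ⟨i, b⟩ ⟨j, c⟩ hij
    cases b <;> cases c <;> simp only [φ, if_true, Bool.false_eq_true, if_false] at hij
    · have := ι.injective (e.injective (Subtype.ext hij)); simp [this]
    · exact absurd (hij ▸ (ι j).2) (hin _)
    · exact absurd (hij ▸ (ι i).2) (hin _)
    · have := ι.injective (Subtype.ext hij); simp [this]
  refine ⟨φ, hφ, ?_⟩
  have hsub : F ⊆ trvFam φ := by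
    intro S hS
    unfold trvFam
    rw [Finset.mem_image]
    refine ⟨fun i => decide ((ι i).1 ∈ S), Finset.mem_univ _, ?_⟩
    ext x
    constructor
    · intro hx
      simp only [trv, Finset.mem_image, Finset.mem_univ, true_and] at hx
      obtain ⟨i, rfl⟩ := hx
      by_cases hi : (ι i).1 ∈ S
      · simpa [φ, hi] using hi
      · have := hcompl S hS (ι i)
        simp only [φ, hi, decide_false, Bool.false_eq_true, if_false]
        tauto
    · intro hx
      by_cases hxA : x ∈ A₀
      · have : x = φ (ι.symm ⟨x, hxA⟩, true) := by simp [φ]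
        rw [this, mem_trv φ hφ]
        simpa using hx
      · have hxY : x ∈ U \ A₀ := Finset.mem_sdiff.2 ⟨hFU S hS hx, hxA⟩
        have : x = φ (ι.symm (e.symm ⟨x, hxY⟩), false) := by simp [φ]
        rw [this, mem_trv φ hφ]
        have h2 := hcompl S hS (e.symm ⟨x, hxY⟩)
        simp at h2
        simp
        tauto
  by_contra hne
  exact hm.2 _ (Finset.ssubset_iff_subset_ne.2 ⟨hsub, hne⟩) ⟨α, trvFam_hke h.1 φ hφ⟩

lemma union_trvFam {α : ℕ} (φ : Fin α × Bool → ℕ) (hφ : Function.Injective φ) (x : ℕ) :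
    x ∈ famUnion (trvFam φ) ↔ ∃ p, φ p = x := by
  rw [mem_famUnion]
  constructor
  · rintro ⟨A, hA, hx⟩
    simp only [trvFam, Finset.mem_image, Finset.mem_univ, true_and] at hA
    obtain ⟨c, rfl⟩ := hA
    exact mem_trv_range φ c x hx
  · rintro ⟨p, rfl⟩
    refine ⟨trv φ (fun _ => p.2), by simp [trvFam], ?_⟩
    rw [mem_trv φ hφ]

/-- two maximal hke collections with the same `α` are isomorphic. -/
theorem isMaxHKE_unique (F₁ F₂ : Finset (Finset ℕ)) (α : ℕ)
    (h₁ : IsMaxHKE F₁) (h₂ : IsMaxHKE F₂)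
    (hα₁ : IsHKE F₁ α) (hα₂ : IsHKE F₂ α) :
    CollIso F₁ F₂ := by
  classical
  obtain ⟨φ, hφ, rfl⟩ := max_struct F₁ α h₁ hα₁
  obtain ⟨ψ, hψ, rfl⟩ := max_struct F₂ α h₂ hα₂
  have : Nonempty (Fin α × Bool) := ⟨⟨⟨0, hα₁.1⟩, true⟩⟩
  have hg : ∀ p, ψ (Function.invFun φ (φ p)) = ψ p := fun p => by
    rw [Function.leftInverse_invFun hφ p]
  refine ⟨fun x => ψ (Function.invFun φ x), ⟨?_, ?_, ?_⟩, ?_, ?_⟩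
  · intro x _
    exact Finset.mem_coe.2 ((union_trvFam ψ hψ _).2 ⟨_, rfl⟩)
  · intro x hx y hy hxy
    obtain ⟨p, rfl⟩ := (union_trvFam φ hφ _).1 (Finset.mem_coe.1 hx)
    obtain ⟨q, rfl⟩ := (union_trvFam φ hφ _).1 (Finset.mem_coe.1 hy)
    simp only [hg] at hxy
    rw [hψ hxy]
  · intro y hy
    obtain ⟨p, rfl⟩ := (union_trvFam ψ hψ _).1 (Finset.mem_coe.1 hy)
    exact ⟨φ p, Finset.mem_coe.2 ((union_trvFam φ hφ _).2 ⟨_, rfl⟩), hg p⟩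
  · intro S hS
    simp only [trvFam, Finset.mem_image, Finset.mem_univ, true_and] at hS ⊢
    obtain ⟨c, rfl⟩ := hS
    refine ⟨c, ?_⟩
    unfold trv
    rw [Finset.image_image]
    congr 1
    funext i
    exact (hg _).symm
  · intro S hS
    simp only [trvFam, Finset.mem_image, Finset.mem_univ, true_and] at hS
    obtain ⟨c, rfl⟩ := hS
    refine Finset.mem_image.2 ⟨c, Finset.mem_univ _, ?_⟩
    ext x
    rw [Finset.mem_filter, union_trvFam φ hφ]
    constructor
    · intro hx
      obtain ⟨p, rfl⟩ := mem_trv_range φ c x hx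
      refine ⟨⟨p, rfl⟩, ?_⟩
      beta_reduce
      rw [hg, mem_trv ψ hψ]
      exact (mem_trv φ hφ c p).1 hx
    · rintro ⟨⟨p, rfl⟩, hx⟩
      beta_reduce at hx
      rw [hg, mem_trv ψ hψ] at hx
      exact (mem_trv φ hφ c p).2 hx
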